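/- Let k ≥ 2, r ≥ 1, let G = (N^k, Θ) be a downward directed graph, F a partial selection function, D ⊆ N^k finite, and ρ_D : D → N a function with ρ_D(x) ≥ min(x) for all x ∈ D. Then: (i) for every x ∈ D with Φ^D_x ≠ ∅ one has h^ρ_D(x) = ŝ_D(x) < max(x); and (ii) for every E ⊆ N with E^k ⊆ D and |E| = p ≥ 2, ŝ_D is regressively regular over E if and only if h^ρ_D is regressively regular over E. -/

import Mathlib

open scoped Classical

/-- The maximum coordinate of a `k`-tuple of nonnegative integers. -/
def maxv {k : ℕ} (z : Fin k → ℕ) : ℕ := Finset.univ.sup z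

/-- The minimum coordinate of a `k`-tuple of nonnegative integers. -/
noncomputable def minv {k : ℕ} (z : Fin k → ℕ) : ℕ := sInf (Set.range z)

/-- A directed graph `(N^k, Θ)` is downward directed if every edge `(x, y)`
satisfies `max(x) > max(y)`. -/
def Downward {k : ℕ} (Θ : Set ((Fin k → ℕ) × (Fin k → ℕ))) : Prop :=
  ∀ e ∈ Θ, maxv e.2 < maxv e.1

/-- Two `k`-tuples are order equivalent if they have the same order type:
corresponding coordinates compare the same way. -/
def OrdEquiv {k : ℕ} (x y : Fin k → ℕ) : Prop :=
  ∀ i j : Fin k, (x i < x j ↔ y i < y j) ∧ (x i = x j ↔ y i = y j)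

/-- `f` is regressively regular over `E`: for each order type of `k`-tuples,
either `f(x) = f(y) < min(E)` for all `x, y ∈ E^k` of that order type, or
`f(x) ≥ min(x)` for all `x ∈ E^k` of that order type. -/
def RegReg {k : ℕ} (f : (Fin k → ℕ) → ℕ) (E : Set ℕ) : Prop :=
  ∀ x : Fin k → ℕ, (∀ i, x i ∈ E) →
    (∀ y : Fin k → ℕ, (∀ i, y i ∈ E) → OrdEquiv x y → f y = f x ∧ f x < sInf E) ∨
    (∀ y : Fin k → ℕ, (∀ i, y i ∈ E) → OrdEquiv x y → minv y ≤ f y)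

/-- One step of the recursion defining `Φ^D_z`: given the pair
`prev y = (value at y, Φ^D_y ≠ ∅)` for vertices `y` below `z`, this is the set of
defined values `F[z, (y_1,n_1), …, (y_r,n_r)]` with each `y_i ∈ G_D^z` and
`n_i = prev(y_i).1` if `Φ^D_{y_i} ≠ ∅`, `n_i = min(y_i)` if `Φ^D_{y_i} = ∅`. -/
def PhiStep {k r : ℕ} (Θ : Set ((Fin k → ℕ) × (Fin k → ℕ))) (D : Set (Fin k → ℕ))
    (F : (Fin k → ℕ) → (Fin r → (Fin k → ℕ) × ℕ) → Option ℕ)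
    (prev : (Fin k → ℕ) → ℕ × Prop) (z : Fin k → ℕ) : Set ℕ :=
  {n | ∃ w : Fin r → (Fin k → ℕ) × ℕ,
    (∀ i : Fin r, (z ∈ D ∧ (w i).1 ∈ D ∧ (z, (w i).1) ∈ Θ) ∧
      (w i).2 = if (prev ((w i).1)).2 then (prev ((w i).1)).1 else minv ((w i).1)) ∧
    F z w = some n}

/-- Fuel-based recursion computing `(ŝ_D(z), Φ^D_z ≠ ∅)`; since `G` is downward
directed, fuel `max(z)` suffices, see `sD` and `PhiNEs`. -/
noncomputable def sAuxN {k r : ℕ} (Θ : Set ((Fin k → ℕ) × (Fin k → ℕ)))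
    (D : Set (Fin k → ℕ)) (F : (Fin k → ℕ) → (Fin r → (Fin k → ℕ) × ℕ) → Option ℕ) :
    ℕ → (Fin k → ℕ) → ℕ × Prop
  | 0, z =>
      (if (PhiStep Θ D F (fun y => (maxv y, False)) z).Nonempty then
        sInf (PhiStep Θ D F (fun y => (maxv y, False)) z)
      else maxv z,
      (PhiStep Θ D F (fun y => (maxv y, False)) z).Nonempty)
  | (m + 1), z =>
      (if (PhiStep Θ D F (sAuxN Θ D F m) z).Nonempty then
        sInf (PhiStep Θ D F (sAuxN Θ D F m) z)
      else maxv z,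
      (PhiStep Θ D F (sAuxN Θ D F m) z).Nonempty)

/-- `ŝ_D(z)`: `max(z)` if `Φ^D_z = ∅`, else `min(Φ^D_z)`. -/
noncomputable def sD {k r : ℕ} (Θ : Set ((Fin k → ℕ) × (Fin k → ℕ)))
    (D : Set (Fin k → ℕ)) (F : (Fin k → ℕ) → (Fin r → (Fin k → ℕ) × ℕ) → Option ℕ)
    (z : Fin k → ℕ) : ℕ :=
  (sAuxN Θ D F (maxv z) z).1

/-- The statement `Φ^D_z ≠ ∅` (computed along the recursion for `ŝ_D`). -/
def PhiNEs {k r : ℕ} (Θ : Set ((Fin k → ℕ) × (Fin k → ℕ)))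
    (D : Set (Fin k → ℕ)) (F : (Fin k → ℕ) → (Fin r → (Fin k → ℕ) × ℕ) → Option ℕ)
    (z : Fin k → ℕ) : Prop :=
  (sAuxN Θ D F (maxv z) z).2

/-- The set `Φ^D_z` for the recursion defining `ŝ_D`. -/
def PhiD {k r : ℕ} (Θ : Set ((Fin k → ℕ) × (Fin k → ℕ)))
    (D : Set (Fin k → ℕ)) (F : (Fin k → ℕ) → (Fin r → (Fin k → ℕ) × ℕ) → Option ℕ)
    (z : Fin k → ℕ) : Set ℕ :=
  PhiStep Θ D F (fun y => (sD Θ D F y, PhiNEs Θ D F y)) z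

/-- Fuel-based recursion computing `(h^ρ_D(z), Φ^D_z ≠ ∅)`: same recursion as for
`ŝ_D` except that the value is `ρ(z)` when `Φ^D_z = ∅`. -/
noncomputable def hAuxN {k r : ℕ} (Θ : Set ((Fin k → ℕ) × (Fin k → ℕ)))
    (D : Set (Fin k → ℕ)) (F : (Fin k → ℕ) → (Fin r → (Fin k → ℕ) × ℕ) → Option ℕ)
    (ρ : (Fin k → ℕ) → ℕ) : ℕ → (Fin k → ℕ) → ℕ × Prop
  | 0, z =>
      (if (PhiStep Θ D F (fun y => (maxv y, False)) z).Nonempty then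
        sInf (PhiStep Θ D F (fun y => (maxv y, False)) z)
      else ρ z,
      (PhiStep Θ D F (fun y => (maxv y, False)) z).Nonempty)
  | (m + 1), z =>
      (if (PhiStep Θ D F (hAuxN Θ D F ρ m) z).Nonempty then
        sInf (PhiStep Θ D F (hAuxN Θ D F ρ m) z)
      else ρ z,
      (PhiStep Θ D F (hAuxN Θ D F ρ m) z).Nonempty)

/-- `h^ρ_D(z)`: `ρ(z)` if `Φ^D_z = ∅`, else `min(Φ^D_z)`. -/
noncomputable def hRD {k r : ℕ} (Θ : Set ((Fin k → ℕ) × (Fin k → ℕ)))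
    (D : Set (Fin k → ℕ)) (F : (Fin k → ℕ) → (Fin r → (Fin k → ℕ) × ℕ) → Option ℕ)
    (ρ : (Fin k → ℕ) → ℕ) (z : Fin k → ℕ) : ℕ :=
  (hAuxN Θ D F ρ (maxv z) z).1

/-- The statement `Φ^D_z ≠ ∅` (computed along the recursion for `h^ρ_D`). -/
def PhiNEh {k r : ℕ} (Θ : Set ((Fin k → ℕ) × (Fin k → ℕ)))
    (D : Set (Fin k → ℕ)) (F : (Fin k → ℕ) → (Fin r → (Fin k → ℕ) × ℕ) → Option ℕ)
    (ρ : (Fin k → ℕ) → ℕ) (z : Fin k → ℕ) : Prop :=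
  (hAuxN Θ D F ρ (maxv z) z).2

/-- The set `Φ^D_z` for the recursion defining `h^ρ_D`. -/
def PhiDh {k r : ℕ} (Θ : Set ((Fin k → ℕ) × (Fin k → ℕ)))
    (D : Set (Fin k → ℕ)) (F : (Fin k → ℕ) → (Fin r → (Fin k → ℕ) × ℕ) → Option ℕ)
    (ρ : (Fin k → ℕ) → ℕ) (z : Fin k → ℕ) : Set ℕ :=
  PhiStep Θ D F (fun y => (hRD Θ D F ρ y, PhiNEh Θ D F ρ y)) z

/-!
The recursion for `Φ^D` sees a vertex `y` only through its label, which is the minimum of `Φ^D_y`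
when `Φ^D_y ≠ ∅` and `min(y)` otherwise. The fallback value, `max(y)` for `ŝ_D` and `ρ_D(y)` for
`h^ρ_D`, never enters a label, so both recursions produce the same sets `Φ^D`, and the two
functions agree wherever `Φ^D ≠ ∅`. A selected value is a label of an out-neighbour, hence, by
induction along edges, below the maximum of the source. Where `Φ^D_x = ∅` both functions are at
least `min(x)`, and regressive regularity over `E` cannot distinguish such values, since `min(x) ≥
min(E)` for `x ∈ E^k`.
-/

section Tuples

variable {k : ℕ} [NeZero k]

theorem minv_le_maxv (z : Fin k → ℕ) : minv z ≤ maxv z :=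
  (ciInf_le' z 0).trans (Finset.le_sup (Finset.mem_univ 0))

theorem sInf_le_minv {E : Set ℕ} {z : Fin k → ℕ} (hz : ∀ i, z i ∈ E) : sInf E ≤ minv z :=
  le_ciInf fun i => Nat.sInf_le (hz i)

end Tuples

section RegressiveRegularity

variable {k : ℕ} [NeZero k] {f g : (Fin k → ℕ) → ℕ} {E : Set ℕ}

theorem RegReg.of_eq_or_minv_le (hf : RegReg f E)
    (h : ∀ x : Fin k → ℕ, (∀ i, x i ∈ E) → f x = g x ∨ (minv x ≤ f x ∧ minv x ≤ g x)) :
    RegReg g E := by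
  have eq_of_lt {x : Fin k → ℕ} (hx : ∀ i, x i ∈ E) (hlt : f x < sInf E) : g x = f x :=
    ((h x hx).resolve_right fun hmin => (hlt.trans_le (sInf_le_minv hx)).not_ge hmin.1).symm
  intro x hx
  refine (hf x hx).imp (fun hconst y hy hxy => ?_) fun hmin y hy hxy => ?_
  · obtain ⟨hyx, hlt⟩ := hconst y hy hxy
    rw [eq_of_lt hx hlt, eq_of_lt hy (hyx ▸ hlt)]
    exact ⟨hyx, hlt⟩
  · exact (h y hy).elim (fun heq => heq ▸ hmin y hy hxy) And.right

theorem regReg_congr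
    (h : ∀ x : Fin k → ℕ, (∀ i, x i ∈ E) → f x = g x ∨ (minv x ≤ f x ∧ minv x ≤ g x)) :
    RegReg f E ↔ RegReg g E :=
  ⟨fun hf => hf.of_eq_or_minv_le h,
    fun hg => hg.of_eq_or_minv_le fun x hx => (h x hx).imp Eq.symm And.symm⟩

end RegressiveRegularity

section Recursion

variable {k r : ℕ} {Θ : Set ((Fin k → ℕ) × (Fin k → ℕ))} {D : Set (Fin k → ℕ)}
  {F : (Fin k → ℕ) → (Fin r → (Fin k → ℕ) × ℕ) → Option ℕ}

/-- The number `n_i` that the recursion for `Φ^D` attaches to the vertex `y = y_i`, where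
`prev y` is the pair (value at `y`, `Φ^D_y ≠ ∅`). -/
noncomputable def label (prev : (Fin k → ℕ) → ℕ × Prop) (y : Fin k → ℕ) : ℕ :=
  if (prev y).2 then (prev y).1 else minv y

theorem phiStep_congr {prev prev' : (Fin k → ℕ) → ℕ × Prop} {z : Fin k → ℕ}
    (h : ∀ y, (z, y) ∈ Θ → label prev y = label prev' y) :
    PhiStep Θ D F prev z = PhiStep Θ D F prev' z := by
  ext n
  refine exists_congr fun w => and_congr_left fun _ => forall_congr' fun i =>
    and_congr_right fun hi => ?_
  exact (h _ hi.2.2).congr_right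

theorem exists_edge_eq_label_of_mem_phiStep
    (hF : ∀ z w n, F z w = some n → ∃ i : Fin r, n = (w i).2)
    {prev : (Fin k → ℕ) → ℕ × Prop} {z : Fin k → ℕ} {n : ℕ} (hn : n ∈ PhiStep Θ D F prev z) :
    ∃ y, (z, y) ∈ Θ ∧ n = label prev y := by
  obtain ⟨w, hw, hFw⟩ := hn
  obtain ⟨i, rfl⟩ := hF z w n hFw
  exact ⟨(w i).1, (hw i).1.2.2, (hw i).2⟩

theorem sAuxN_eq_hAuxN_maxv (m : ℕ) : sAuxN Θ D F m = hAuxN Θ D F maxv m := by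
  induction m with
  | zero => rfl
  | succ m ih => funext z; simp only [sAuxN, hAuxN, ih]

theorem phiD_eq_phiStep_hAuxN (z : Fin k → ℕ) :
    PhiD Θ D F z = PhiStep Θ D F (fun y => hAuxN Θ D F maxv (maxv y) y) z := by
  simp only [PhiD, sD, PhiNEs, sAuxN_eq_hAuxN_maxv]

theorem hAuxN_eq_of_maxv_le (hΘ : Downward Θ) (ρ : (Fin k → ℕ) → ℕ) {m : ℕ} {z : Fin k → ℕ}
    (hz : maxv z ≤ m) :
    hAuxN Θ D F ρ m z =
      (if (PhiD Θ D F z).Nonempty then sInf (PhiD Θ D F z) else ρ z, (PhiD Θ D F z).Nonempty) := by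
  -- `PhiD` evaluates each `y` at fuel `max(y)`, not at fuel `m`: hence strong induction.
  induction m using Nat.strong_induction_on generalizing ρ z with
  | _ m ih =>
    cases m with
    | zero =>
      have hΦ : PhiStep Θ D F (fun y => (maxv y, False)) z = PhiD Θ D F z :=
        phiStep_congr fun y hy => absurd ((hΘ _ hy).trans_le hz) (Nat.not_lt_zero _)
      simp only [hAuxN, hΦ]
    | succ m =>
      have hΦ : PhiStep Θ D F (hAuxN Θ D F ρ m) z = PhiD Θ D F z := by
        rw [phiD_eq_phiStep_hAuxN]
        refine phiStep_congr fun y hy => ?_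
        have hym : maxv y < m + 1 := (hΘ _ hy).trans_le hz
        simp only [label, ih m m.lt_succ_self ρ (Nat.le_of_lt_succ hym),
          ih (maxv y) hym maxv le_rfl]
        split_ifs <;> rfl
      simp only [hAuxN, hΦ]

theorem hRD_eq_ite (hΘ : Downward Θ) (ρ : (Fin k → ℕ) → ℕ) (z : Fin k → ℕ) :
    hRD Θ D F ρ z = if (PhiD Θ D F z).Nonempty then sInf (PhiD Θ D F z) else ρ z :=
  congrArg Prod.fst (hAuxN_eq_of_maxv_le hΘ ρ le_rfl)

theorem sD_eq_hRD_maxv : sD Θ D F = hRD Θ D F maxv := by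
  funext z
  simp only [sD, hRD, sAuxN_eq_hAuxN_maxv]

theorem phiNEs_iff_phiD_nonempty (hΘ : Downward Θ) (z : Fin k → ℕ) :
    PhiNEs Θ D F z ↔ (PhiD Θ D F z).Nonempty := by
  rw [PhiNEs, sAuxN_eq_hAuxN_maxv, hAuxN_eq_of_maxv_le hΘ maxv le_rfl]

theorem hRD_eq_sD_of_phiD_nonempty (hΘ : Downward Θ) (ρ : (Fin k → ℕ) → ℕ) {z : Fin k → ℕ}
    (hz : (PhiD Θ D F z).Nonempty) : hRD Θ D F ρ z = sD Θ D F z := by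
  simp only [sD_eq_hRD_maxv, hRD_eq_ite hΘ, if_pos hz]

theorem hRD_eq_of_phiD_eq_empty (hΘ : Downward Θ) (ρ : (Fin k → ℕ) → ℕ) {z : Fin k → ℕ}
    (hz : PhiD Θ D F z = ∅) : hRD Θ D F ρ z = ρ z := by
  rw [hRD_eq_ite hΘ, if_neg (Set.not_nonempty_iff_eq_empty.2 hz)]

theorem sD_mem_phiD (hΘ : Downward Θ) {z : Fin k → ℕ} (hz : (PhiD Θ D F z).Nonempty) :
    sD Θ D F z ∈ PhiD Θ D F z := by
  rw [sD_eq_hRD_maxv, hRD_eq_ite hΘ, if_pos hz]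
  exact Nat.sInf_mem hz

theorem sD_lt_maxv [NeZero k] (hΘ : Downward Θ)
    (hF : ∀ z w n, F z w = some n → ∃ i : Fin r, n = (w i).2) {z : Fin k → ℕ}
    (hz : (PhiD Θ D F z).Nonempty) : sD Θ D F z < maxv z := by
  induction hm : maxv z using Nat.strong_induction_on generalizing z with
  | _ m ih =>
    subst hm
    obtain ⟨y, hzy, hlabel⟩ := exists_edge_eq_label_of_mem_phiStep hF (sD_mem_phiD hΘ hz)
    have hyz : maxv y < maxv z := hΘ _ hzy
    rw [hlabel]
    by_cases hy : PhiNEs Θ D F y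
    · rw [label, if_pos hy]
      exact (ih _ hyz ((phiNEs_iff_phiD_nonempty hΘ y).1 hy) rfl).trans hyz
    · rw [label, if_neg hy]
      exact (minv_le_maxv y).trans_lt hyz

theorem sD_eq_hRD_or_minv_le [NeZero k] (hΘ : Downward Θ) {ρ : (Fin k → ℕ) → ℕ} {z : Fin k → ℕ}
    (hρ : minv z ≤ ρ z) :
    sD Θ D F z = hRD Θ D F ρ z ∨ (minv z ≤ sD Θ D F z ∧ minv z ≤ hRD Θ D F ρ z) := by
  obtain hz | hz := (PhiD Θ D F z).eq_empty_or_nonempty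
  · rw [sD_eq_hRD_maxv, hRD_eq_of_phiD_eq_empty hΘ maxv hz,
      hRD_eq_of_phiD_eq_empty hΘ ρ hz]
    exact .inr ⟨minv_le_maxv z, hρ⟩
  · exact .inl (hRD_eq_sD_of_phiD_nonempty hΘ ρ hz).symm

end Recursion

theorem stmt6_general {k r : ℕ} [NeZero k]
    {Θ : Set ((Fin k → ℕ) × (Fin k → ℕ))} (hΘ : Downward Θ)
    {F : (Fin k → ℕ) → (Fin r → (Fin k → ℕ) × ℕ) → Option ℕ}
    (hF : ∀ z w n, F z w = some n → ∃ i : Fin r, n = (w i).2)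
    {D : Set (Fin k → ℕ)} {ρ : (Fin k → ℕ) → ℕ} (hρ : ∀ x ∈ D, minv x ≤ ρ x) :
    (∀ x, (PhiD Θ D F x).Nonempty →
      hRD Θ D F ρ x = sD Θ D F x ∧ sD Θ D F x < maxv x) ∧
    (∀ E : Set ℕ, (∀ z : Fin k → ℕ, (∀ i, z i ∈ E) → z ∈ D) →
      (RegReg (sD Θ D F) E ↔ RegReg (hRD Θ D F ρ) E)) :=
  ⟨fun _ hx => ⟨hRD_eq_sD_of_phiD_nonempty hΘ ρ hx, sD_lt_maxv hΘ hF hx⟩,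
    fun _ hE => regReg_congr fun x hx => sD_eq_hRD_or_minv_le hΘ (hρ x (hE x hx))⟩

/-- with `k ≥ 2`, `r ≥ 1`, `G = (N^k, Θ)` downward directed,
`F` a partial selection function, `D ⊆ N^k` finite and `ρ_D : D → N` with
`ρ_D(x) ≥ min(x)`: (i) for every `x ∈ D` with `Φ^D_x ≠ ∅` one has
`h^ρ_D(x) = ŝ_D(x) < max(x)`; (ii) for every `E ⊆ N` with `E^k ⊆ D` and
`|E| = p ≥ 2`, `ŝ_D` is regressively regular over `E` iff `h^ρ_D` is. -/
theorem stmt6 (k r : ℕ) (hk : 2 ≤ k) (hr : 1 ≤ r)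
    (Θ : Set ((Fin k → ℕ) × (Fin k → ℕ))) (hΘ : Downward Θ)
    (F : (Fin k → ℕ) → (Fin r → (Fin k → ℕ) × ℕ) → Option ℕ)
    (hF : ∀ z w n, F z w = some n → ∃ i : Fin r, n = (w i).2)
    (D : Set (Fin k → ℕ)) (hD : D.Finite)
    (ρ : (Fin k → ℕ) → ℕ) (hρ : ∀ x ∈ D, minv x ≤ ρ x) :
    (∀ x ∈ D, (PhiD Θ D F x).Nonempty →
      hRD Θ D F ρ x = sD Θ D F x ∧ sD Θ D F x < maxv x) ∧
    (∀ (E : Finset ℕ) (p : ℕ), 2 ≤ p → E.card = p →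
      (∀ z : Fin k → ℕ, (∀ i, z i ∈ E) → z ∈ D) →
      (RegReg (sD Θ D F) (E : Set ℕ) ↔ RegReg (hRD Θ D F ρ) (E : Set ℕ))) := by
  have : NeZero k := ⟨by omega⟩
  obtain ⟨hsel, hreg⟩ := stmt6_general hΘ hF hρ
  exact ⟨fun x _ => hsel x, fun E _ _ _ => hreg E⟩
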